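/- Let φ(x) = Σ_{n≥0} φ_n·x^n be a non-polynomial function analytic in a neighborhood of 0 with φ_n ≥ 0 for all n, satisfying E(x, φ(x)) = 0 near 0, where E is an irreducible polynomial whose curve E = 0 admits a real proper rational parametrization P = (x̂, ŷ) with x̂(∞) = ∞. Then: (i) there exists a unique s₀ ∈ ℝ such that (P, s₀) parametrizes φ locally at 0; and (ii) assuming (as can be arranged by replacing s by −s) that x̂′(s₀) > 0, the quantity s_c := inf{s ≥ s₀ : x̂′(s) = 0 or ŷ(s) = ∞} is finite, s_c is a critical point of P, and φ has its dominant singularity at x_c := x̂(s_c) > 0: the radius of convergence of φ equals x_c and φ admits no analytic continuation to any neighborhood of x_c. -/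

import Mathlib

open Polynomial

/-- A rational map of the Riemann sphere, given by a pair of coprime polynomials. -/
structure RationalMap where
  num : Polynomial ℂ
  den : Polynomial ℂ
  den_ne_zero : den ≠ 0
  coprime : IsCoprime num den

namespace RationalMap

/-- The finite-valued function `s ↦ num(s)/den(s)` (junk value `0` at poles). -/
noncomputable def toFun (f : RationalMap) (s : ℂ) : ℂ := f.num.eval s / f.den.eval s

/-- Evaluation as a map to the Riemann sphere `ℂ ∪ {∞}`. -/
noncomputable def eval (f : RationalMap) (s : ℂ) : OnePoint ℂ :=
  if f.den.eval s = 0 then OnePoint.infty else ((f.toFun s : ℂ) : OnePoint ℂ)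

/-- The value of the rational map at the point `∞` of the Riemann sphere. -/
noncomputable def evalInf (f : RationalMap) : OnePoint ℂ :=
  if f.den.degree < f.num.degree then OnePoint.infty
  else ((f.num.coeff f.den.natDegree / f.den.leadingCoeff : ℂ) : OnePoint ℂ)

/-- A rational map is real if (after clearing a common constant) its numerator and
denominator can be written with real coefficients. -/
def IsReal (f : RationalMap) : Prop :=
  ∃ (c : ℂ) (P Q : Polynomial ℝ), c ≠ 0 ∧
    c • f.num = P.map (algebraMap ℝ ℂ) ∧ c • f.den = Q.map (algebraMap ℝ ℂ)

end RationalMap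

/-- Evaluation of a bivariate polynomial `E` at `(x,y)`. -/
noncomputable def evalE (E : MvPolynomial (Fin 2) ℂ) (x y : ℂ) : ℂ :=
  MvPolynomial.eval ![x, y] E

/-- `(X,Y)` is a rational parametrization of the curve `E(x,y) = 0`:
`E(X(s), Y(s)) = 0` for all but finitely many `s ∈ ℂ`. -/
def IsParametrization (E : MvPolynomial (Fin 2) ℂ) (X Y : RationalMap) : Prop :=
  Set.Finite {s : ℂ |
    ¬ (X.den.eval s ≠ 0 ∧ Y.den.eval s ≠ 0 ∧ evalE E (X.toFun s) (Y.toFun s) = 0)}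

/-- The parametrization `(X,Y)` is proper: for all but finitely many points `(x,y)` on the
curve, the equation `(X(s), Y(s)) = (x,y)` has exactly one solution `s ∈ ℂ`. -/
def IsProper (E : MvPolynomial (Fin 2) ℂ) (X Y : RationalMap) : Prop :=
  Set.Finite {P : ℂ × ℂ | evalE E P.1 P.2 = 0 ∧
    ¬ ∃! s : ℂ, X.eval s = ((P.1 : ℂ) : OnePoint ℂ) ∧ Y.eval s = ((P.2 : ℂ) : OnePoint ℂ)}

/-- `s` is a critical point of the parametrization `(X,Y)` if `X′(s) = 0` (as a rational
function, i.e. the numerator `num′·den − num·den′` of the derivative vanishes at `s`) or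
`Y(s) = ∞`. -/
def IsCriticalPt (X Y : RationalMap) (s : ℂ) : Prop :=
  (X.num.derivative * X.den - X.num * X.den.derivative).eval s = 0 ∨ Y.den.eval s = 0

open Filter Topology Set

/-- The sum of the power series with real coefficients `c`, at complex arguments. -/
noncomputable def powerSum (c : ℕ → ℝ) (x : ℂ) : ℂ := ∑' n : ℕ, (c n : ℂ) * x ^ n

/-- The power series with coefficients `c` converges on the open disc of radius `R`. -/
def ConvergesOn (c : ℕ → ℝ) (R : ℝ) : Prop :=
  ∀ x : ℂ, ‖x‖ < R → Summable (fun n : ℕ => (c n : ℂ) * x ^ n)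

lemma summable_complex_iff_real {c : ℕ → ℝ} {x : ℝ} :
    Summable (fun n : ℕ => (c n : ℂ) * (x : ℂ) ^ n) ↔ Summable (fun n : ℕ => c n * x ^ n) := by
  rw [← Complex.summable_ofReal]
  push_cast
  rfl

lemma convergesOn_of_summable {c : ℕ → ℝ} (hc : ∀ n, 0 ≤ c n) {b : ℝ}
    (hs : Summable (fun n : ℕ => c n * b ^ n)) : ConvergesOn c b := by
  intro x hx
  refine Summable.of_norm_bounded hs fun n => ?_
  rw [norm_mul, norm_pow, Complex.norm_real, Real.norm_of_nonneg (hc n)]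
  gcongr
  exact hc n

lemma ConvergesOn.differentiable_and_hasSum_deriv {c : ℕ → ℝ} (hc : ∀ n, 0 ≤ c n) {R : ℝ}
    (hs : ConvergesOn c R) {z : ℂ} (hz : ‖z‖ < R) :
    DifferentiableAt ℂ (powerSum c) z ∧
      HasSum (fun n : ℕ => (c n : ℂ) * (n * z ^ (n - 1))) (deriv (powerSum c) z) := by
  obtain ⟨ρ, h1, h2⟩ := exists_between hz
  have hρ : 0 ≤ ρ := (norm_nonneg z).trans h1.le
  have hsρ : Summable (fun n : ℕ => c n * ρ ^ n) :=
    summable_complex_iff_real.1 (hs (ρ : ℂ) (by simpa [abs_of_nonneg hρ] using h2))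
  have hd : ∀ n : ℕ, DifferentiableOn ℂ (fun x : ℂ => (c n : ℂ) * x ^ n) (Metric.ball 0 ρ) :=
    fun n => by fun_prop
  have hb : ∀ n : ℕ, ∀ w ∈ Metric.ball (0 : ℂ) ρ, ‖(c n : ℂ) * w ^ n‖ ≤ c n * ρ ^ n := by
    intro n w hw
    rw [mem_ball_zero_iff] at hw
    rw [norm_mul, norm_pow, Complex.norm_real, Real.norm_of_nonneg (hc n)]
    gcongr
    exact hc n
  have hzm : z ∈ Metric.ball (0 : ℂ) ρ := by simpa using h1
  refine ⟨(Complex.differentiableOn_tsum_of_summable_norm hsρ hd Metric.isOpen_ball hb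
    |>.differentiableAt (Metric.isOpen_ball.mem_nhds hzm)), ?_⟩
  have := Complex.hasSum_deriv_of_summable_norm hsρ hd Metric.isOpen_ball hb hzm
  convert! this using 2 with n
  simp

lemma ConvergesOn.analyticAt {c : ℕ → ℝ} (hc : ∀ n, 0 ≤ c n) {R : ℝ}
    (hs : ConvergesOn c R) {z : ℂ} (hz : ‖z‖ < R) : AnalyticAt ℂ (powerSum c) z := by
  have hd : DifferentiableOn ℂ (powerSum c) (Metric.ball 0 R) := fun w hw =>
    (hs.differentiable_and_hasSum_deriv hc (by simpa using hw)).1.differentiableWithinAt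
  exact hd.analyticAt (Metric.isOpen_ball.mem_nhds (by simpa using hz))

lemma ConvergesOn.hasSum_deriv_shift {c : ℕ → ℝ} (hc : ∀ n, 0 ≤ c n) {R : ℝ}
    (hs : ConvergesOn c R) {z : ℂ} (hz : ‖z‖ < R) :
    HasSum (fun n : ℕ => (((n + 1) * c (n + 1) : ℝ) : ℂ) * z ^ n) (deriv (powerSum c) z) := by
  have h := (hs.differentiable_and_hasSum_deriv hc hz).2
  rw [← hasSum_nat_add_iff' 1] at h
  simp only [Finset.range_one, Finset.sum_singleton, Nat.cast_zero, zero_mul, mul_zero,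
    sub_zero] at h
  refine h.congr_fun fun n => ?_
  rw [Nat.add_sub_cancel]
  push_cast
  ring

lemma ConvergesOn.iteratedDeriv_nonneg (k : ℕ) : ∀ {c : ℕ → ℝ} (_ : ∀ n, 0 ≤ c n) {R : ℝ}
    (_ : ConvergesOn c R) {a : ℝ} (_ : 0 ≤ a) (_ : a < R),
    ∃ v : ℝ, 0 ≤ v ∧ iteratedDeriv k (powerSum c) (a : ℂ) = v := by
  induction k with
  | zero =>
    intro c hc R hs a ha haR
    refine ⟨∑' n, c n * a ^ n, tsum_nonneg fun n => mul_nonneg (hc n) (pow_nonneg ha n), ?_⟩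
    simp [powerSum, Complex.ofReal_tsum]
  | succ k ih =>
    intro c hc R hs a ha haR
    have hc' : ∀ n : ℕ, 0 ≤ ((n : ℝ) + 1) * c (n + 1) := fun n =>
      mul_nonneg (by positivity) (hc _)
    have hs' : ConvergesOn (fun n : ℕ => ((n : ℝ) + 1) * c (n + 1)) R := fun x hx =>
      (hs.hasSum_deriv_shift hc hx).summable
    obtain ⟨v, hv, h⟩ := ih hc' hs' ha haR
    refine ⟨v, hv, ?_⟩
    rw [iteratedDeriv_succ', ← h]
    apply Filter.EventuallyEq.iteratedDeriv_eq
    have hmem : Metric.ball (0 : ℂ) R ∈ 𝓝 (a : ℂ) :=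
      Metric.isOpen_ball.mem_nhds (by simpa [abs_of_nonneg ha] using haR)
    filter_upwards [hmem] with z hz
    exact (hs.hasSum_deriv_shift hc (by simpa using hz)).tsum_eq.symm

open scoped ComplexOrder in
/-- **Pringsheim's theorem**: a power series with nonnegative coefficients whose sum extends
analytically around the positive point `R` of the circle of radius `R` converges beyond `R`. -/
lemma ConvergesOn.exists_summable_gt {c : ℕ → ℝ} (hc : ∀ n, 0 ≤ c n) {R : ℝ} (hR : 0 < R)
    (hs : ConvergesOn c R) {g : ℂ → ℂ} {ε : ℝ} (hε : 0 < ε)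
    (hg : ∀ w ∈ Metric.ball (R : ℂ) ε, AnalyticAt ℂ g w)
    (hgc : ∀ x : ℂ, ‖x‖ < R → x ∈ Metric.ball (R : ℂ) ε → g x = powerSum c x) :
    ∃ b, R < b ∧ Summable (fun n : ℕ => c n * b ^ n) := by
  obtain ⟨η, hη, hηR, hηε⟩ : ∃ η : ℝ, 0 < η ∧ η < R ∧ 4 * η ≤ ε :=
    ⟨min (R / 2) (ε / 4), by positivity, (min_le_left _ _).trans_lt (by linarith),
      by linarith [min_le_right (R / 2) (ε / 4)]⟩
  set a : ℝ := R - η with ha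
  set b : ℝ := R + η / 2 with hb
  have hsub : Metric.ball (a : ℂ) (2 * η) ⊆ Metric.ball (R : ℂ) ε := by
    apply Metric.ball_subset_ball'
    rw [Complex.dist_of_im_eq (by simp), Complex.ofReal_re, Complex.ofReal_re, Real.dist_eq, ha,
      show R - η - R = -η by ring, abs_neg, abs_of_pos hη]
    linarith
  have hdist : dist (b : ℂ) (a : ℂ) < 2 * η := by
    rw [Complex.dist_of_im_eq (by simp), Complex.ofReal_re, Complex.ofReal_re, Real.dist_eq,
      ha, hb, abs_of_pos (by linarith)]
    linarith
  have hnear : ∀ᶠ x in 𝓝 (a : ℂ), g x = powerSum c x := by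
    have h1 : Metric.ball (0 : ℂ) R ∈ 𝓝 (a : ℂ) := Metric.isOpen_ball.mem_nhds (by
      rw [mem_ball_zero_iff, Complex.norm_real, Real.norm_of_nonneg (by linarith)]; linarith)
    have h2 : Metric.ball (R : ℂ) ε ∈ 𝓝 (a : ℂ) :=
      Metric.isOpen_ball.mem_nhds (hsub (Metric.mem_ball_self (by linarith)))
    filter_upwards [h1, h2] with x hx1 hx2
    exact hgc x (by simpa using hx1) hx2
  refine ⟨b, by linarith, summable_of_sum_range_le (c := (g b).re)
    (fun n => mul_nonneg (hc n) (pow_nonneg (by linarith) n)) fun N => ?_⟩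
  set p : ℂ → ℂ := fun x => ∑ n ∈ Finset.range N, (c n : ℂ) * x ^ n with hp
  set d : ℕ → ℝ := fun n => if n < N then 0 else c n with hd
  have hd0 : ∀ n, 0 ≤ d n := fun n => by simp only [hd]; split_ifs <;> simp [hc]
  have hdiff : ∀ x : ℂ, ‖x‖ < R →
      HasSum (fun n : ℕ => (d n : ℂ) * x ^ n) (powerSum c x - p x) := by
    intro x hx
    have h1 : HasSum (fun n : ℕ => if n < N then (c n : ℂ) * x ^ n else 0) (p x) := by
      have : HasSum (fun n : ℕ => if n < N then (c n : ℂ) * x ^ n else 0)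
          (∑ n ∈ Finset.range N, if n < N then (c n : ℂ) * x ^ n else 0) :=
        hasSum_sum_of_ne_finset_zero fun n hn => if_neg (by simpa using hn)
      rwa [Finset.sum_congr rfl fun n hn => if_pos (by simpa using hn)] at this
    convert! (hs x hx).hasSum.sub h1 using 2 with n
    simp only [hd]
    split_ifs <;> simp
  have hsd : ConvergesOn d R := fun x hx => (hdiff x hx).summable
  have hnn : ∀ k, 0 ≤ iteratedDeriv k (fun x => g x - p x) (a : ℂ) := by
    intro k
    obtain ⟨v, hv, h⟩ := hsd.iteratedDeriv_nonneg k hd0 (a := a) (by linarith) (by linarith)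
    have : (fun x => g x - p x) =ᶠ[𝓝 (a : ℂ)] powerSum d := by
      have h1 : Metric.ball (0 : ℂ) R ∈ 𝓝 (a : ℂ) := Metric.isOpen_ball.mem_nhds (by
        rw [mem_ball_zero_iff, Complex.norm_real, Real.norm_of_nonneg (by linarith)]; linarith)
      filter_upwards [hnear, h1] with x hx hx1
      rw [hx]
      exact (hdiff x (by simpa using hx1)).tsum_eq.symm
    rw [this.iteratedDeriv_eq, h]
    exact_mod_cast hv
  have hdo : DifferentiableOn ℂ (fun x => g x - p x) (Metric.ball (a : ℂ) (2 * η)) := by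
    intro x hx
    refine ((hg x (hsub hx)).differentiableAt.sub ?_).differentiableWithinAt
    simp only [hp]
    fun_prop
  have hab : (a : ℂ) ≤ b := by exact_mod_cast (by linarith : a ≤ b)
  have hfin := hdo.nonneg_of_iteratedDeriv_nonneg hnn hab hdist
  have hpb : p b = ((∑ n ∈ Finset.range N, c n * b ^ n : ℝ) : ℂ) := by
    simp [hp]
  have := (Complex.le_def.1 hfin).1
  rw [Complex.sub_re, hpb, Complex.ofReal_re] at this
  simpa using this

/-- A nonconstant analytic function whose derivative vanishes at `z₀` is not injective on any
punctured neighbourhood of `z₀`. -/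
lemma AnalyticAt.not_injOn_of_deriv_eq_zero {f : ℂ → ℂ} {z₀ : ℂ} (hf : AnalyticAt ℂ f z₀)
    (hd : deriv f z₀ = 0) (hconst : ¬ ∀ᶠ z in 𝓝 z₀, f z = f z₀) {U : Set ℂ} (hU : U ∈ 𝓝 z₀) :
    ¬ InjOn f (U \ {z₀}) := by
  have hF : AnalyticAt ℂ (fun z => f z - f z₀) z₀ := hf.sub analyticAt_const
  obtain ⟨k, u, hu, hu0, hk⟩ := hF.exists_eventuallyEq_pow_smul_nonzero_iff.2
    (by simpa only [sub_eq_zero] using hconst)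
  have hk2 : 2 ≤ k := by
    by_contra hlt
    interval_cases k
    · have := hk.self_of_nhds
      simp at this
      exact hu0 this.symm
    · have h1 : deriv (fun z => f z - f z₀) z₀ = 0 := by simpa using hd
      have h2 : HasDerivAt (fun z => (z - z₀) ^ 1 • u z)
          (1 * u z₀ + (z₀ - z₀) * deriv u z₀) z₀ := by
        simp only [pow_one, smul_eq_mul]
        exact ((hasDerivAt_id z₀).sub_const z₀).mul hu.differentiableAt.hasDerivAt
      rw [EventuallyEq.deriv_eq hk, h2.deriv] at h1
      simp at h1
      exact hu0 h1
  have hk0 : (k : ℂ) ≠ 0 := by exact_mod_cast (by omega : k ≠ 0)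
  set v : ℂ → ℂ := fun z => Complex.exp (Complex.log (u z / u z₀) / k) with hv
  have hva : AnalyticAt ℂ v z₀ := by
    have : AnalyticAt ℂ (fun z => u z / u z₀) z₀ := hu.div analyticAt_const hu0
    exact ((this.clog (by simp [div_self hu0])).div analyticAt_const hk0).cexp
  have hvk : ∀ᶠ z in 𝓝 z₀, v z ^ k = u z / u z₀ := by
    filter_upwards [hu.continuousAt.eventually_ne hu0] with z hz
    rw [hv, ← Complex.exp_nat_mul, mul_div_cancel₀ _ hk0, Complex.exp_log (div_ne_zero hz hu0)]
  have hv0 : v z₀ = 1 := by simp [hv, div_self hu0]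
  set h : ℂ → ℂ := fun z => (z - z₀) * v z with hh
  have hha : AnalyticAt ℂ h z₀ := (analyticAt_id.sub analyticAt_const).mul hva
  have hhd : deriv h z₀ = 1 := by
    have h2 : HasDerivAt h (1 * v z₀ + (z₀ - z₀) * deriv v z₀) z₀ :=
      ((hasDerivAt_id z₀).sub_const z₀).mul hva.differentiableAt.hasDerivAt
    simp [h2.deriv, hv0]
  have hmap : map h (𝓝 z₀) = 𝓝 0 := by
    have := hha.hasStrictDerivAt.map_nhds_eq (by simp [hhd])
    simpa [hh] using this
  have hgood : ∀ᶠ z in 𝓝 z₀, z ∈ U ∧ f z = f z₀ + u z₀ * h z ^ k := by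
    filter_upwards [hU, hk, hvk] with z hzU hz1 hz2
    refine ⟨hzU, ?_⟩
    rw [hh]
    simp only [mul_pow, hz2]
    rw [smul_eq_mul] at hz1
    field_simp
    linear_combination hz1
  have hex : ∀ᶠ η in 𝓝 (0 : ℂ), ∃ z, h z = η ∧ z ∈ U ∧ f z = f z₀ + u z₀ * h z ^ k := by
    rw [← hmap, eventually_map]
    filter_upwards [hgood] with z hz
    exact ⟨z, rfl, hz⟩
  obtain ⟨ζ, hζ⟩ : ∃ ζ : ℂ, IsPrimitiveRoot ζ k := ⟨_, Complex.isPrimitiveRoot_exp k (by omega)⟩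
  have hex' : ∀ᶠ η in 𝓝 (0 : ℂ), ∃ z, h z = ζ * η ∧ z ∈ U ∧ f z = f z₀ + u z₀ * h z ^ k := by
    have : Tendsto (fun η : ℂ => ζ * η) (𝓝 0) (𝓝 0) :=
      Continuous.tendsto' (by fun_prop) _ _ (by simp)
    exact this.eventually hex
  obtain ⟨η, ⟨⟨z, hz, hzU, hzf⟩, ⟨w, hw, hwU, hwf⟩⟩, hη⟩ :=
    (((hex.and hex').filter_mono nhdsWithin_le_nhds).and
      (self_mem_nhdsWithin : {0}ᶜ ∈ 𝓝[≠] (0 : ℂ))).exists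
  have hη0 : η ≠ 0 := hη
  have hζη : ζ * η ≠ η := fun h => hζ.ne_one (by omega) (mul_right_cancel₀ hη0 (by simpa using h))
  have hζ0 : ζ * η ≠ 0 := mul_ne_zero (hζ.ne_zero (by omega)) hη0
  intro hinj
  have hzw := hinj (x₁ := z) (x₂ := w)
    ⟨hzU, fun h => hη0 (by rw [← hz, mem_singleton_iff.1 h]; simp [hh])⟩
    ⟨hwU, fun h => hζ0 (by rw [← hw, mem_singleton_iff.1 h]; simp [hh])⟩
    (by rw [hzf, hwf, hz, hw, mul_pow, hζ.pow_eq_one, one_mul])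
  exact hζη (by rw [← hw, ← hzw, hz])

namespace RationalMap

lemma eval_eq_coe_iff {f : RationalMap} {s y : ℂ} :
    f.eval s = (y : OnePoint ℂ) ↔ f.den.eval s ≠ 0 ∧ f.toFun s = y := by
  unfold RationalMap.eval
  split_ifs with h
  · simp [h]
  · simp [h]

lemma num_ne_zero_of_den_eq_zero (f : RationalMap) {s : ℂ} (h : f.den.eval s = 0) :
    f.num.eval s ≠ 0 := by
  obtain ⟨a, b, hab⟩ := f.coprime
  intro h'
  have := congrArg (Polynomial.eval s) hab
  simp [h, h'] at this

/-- If the numerator is a multiple of the denominator at `s`, then `s` is not a pole. -/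
lemma den_ne_zero_of_num_eq (f : RationalMap) {s y : ℂ} (h : f.num.eval s = y * f.den.eval s) :
    f.den.eval s ≠ 0 :=
  fun h0 => f.num_ne_zero_of_den_eq_zero h0 (by rw [h, h0, mul_zero])

lemma analyticAt_toFun (f : RationalMap) {s : ℂ} (h : f.den.eval s ≠ 0) :
    AnalyticAt ℂ f.toFun s :=
  (f.num.differentiable.analyticAt s).div (f.den.differentiable.analyticAt s) h

lemma hasDerivAt_toFun (f : RationalMap) {s : ℂ} (h : f.den.eval s ≠ 0) :
    HasDerivAt f.toFun
      ((f.num.derivative * f.den - f.num * f.den.derivative).eval s / f.den.eval s ^ 2) s := by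
  have := (f.num.hasDerivAt s).div (f.den.hasDerivAt s) h
  simpa using! this

lemma degree_lt_of_evalInf {f : RationalMap} (h : f.evalInf = OnePoint.infty) :
    f.den.degree < f.num.degree := by
  unfold RationalMap.evalInf at h
  split_ifs at h with h'
  · exact h'
  · exact absurd h (OnePoint.coe_ne_infty _)

lemma not_eventually_const {f : RationalMap} (hinf : f.evalInf = OnePoint.infty) {s : ℂ} (y : ℂ)
    (hs : f.den.eval s ≠ 0) : ¬ ∀ᶠ z in 𝓝 s, f.toFun z = y := by
  intro h
  have hden : ∀ᶠ z in 𝓝 s, f.den.eval z ≠ 0 := f.den.continuous.continuousAt.eventually_ne hs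
  have hz : ∀ᶠ z in 𝓝 s, (f.num - C y * f.den).IsRoot z := by
    filter_upwards [h, hden] with z h1 h2
    rw [RationalMap.toFun, div_eq_iff h2] at h1
    simp [h1]
  have hzero : f.num - C y * f.den = 0 :=
    Polynomial.eq_zero_of_infinite_isRoot _ (infinite_of_mem_nhds s hz)
  have hdeg := degree_lt_of_evalInf hinf
  rw [sub_eq_zero.1 hzero] at hdeg
  exact absurd hdeg (not_lt.2 (by
    rw [degree_mul]
    calc (C y).degree + f.den.degree ≤ 0 + f.den.degree := by gcongr; exact degree_C_le
      _ = f.den.degree := zero_add _))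

lemma tendsto_punctured {f : RationalMap} (hinf : f.evalInf = OnePoint.infty) {s : ℂ}
    (hs : f.den.eval s ≠ 0) : Tendsto f.toFun (𝓝[≠] s) (𝓝[≠] (f.toFun s)) := by
  have ha := f.analyticAt_toFun hs
  refine tendsto_nhdsWithin_iff.2 ⟨ha.continuousAt.tendsto.mono_left nhdsWithin_le_nhds, ?_⟩
  exact (ha.eventually_eq_or_eventually_ne analyticAt_const).resolve_left
    (not_eventually_const hinf _ hs)

lemma nhds_le_map {f : RationalMap} (hinf : f.evalInf = OnePoint.infty) {s : ℂ}
    (hs : f.den.eval s ≠ 0) : 𝓝 (f.toFun s) ≤ map f.toFun (𝓝 s) :=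
  (f.analyticAt_toFun hs).eventually_constant_or_nhds_le_map_nhds.resolve_left
    (not_eventually_const hinf _ hs)

lemma IsReal.eval_conj {f : RationalMap} (hf : f.IsReal) {s y : ℂ}
    (h : f.eval s = (y : OnePoint ℂ)) :
    f.eval ((starRingEnd ℂ) s) = (((starRingEnd ℂ) y : ℂ) : OnePoint ℂ) := by
  obtain ⟨c, P, Q, hc, hP, hQ⟩ := hf
  have key : ∀ (p : ℂ[X]) (q : ℝ[X]), c • p = q.map (algebraMap ℝ ℂ) →
      c * p.eval ((starRingEnd ℂ) s) = (starRingEnd ℂ) (c * p.eval s) := by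
    intro p q hpq
    have h1 := fun z => congrArg (Polynomial.eval z) hpq
    simp only [eval_smul, smul_eq_mul] at h1
    rw [h1, h1, eval_map_algebraMap, eval_map_algebraMap]
    exact Polynomial.aeval_conj q s
  have hn := key _ _ hP
  have hd := key _ _ hQ
  rw [eval_eq_coe_iff] at h ⊢
  obtain ⟨h1, rfl⟩ := h
  have h2 : f.den.eval ((starRingEnd ℂ) s) ≠ 0 := by
    intro h0
    rw [h0, mul_zero, eq_comm, map_eq_zero] at hd
    exact mul_ne_zero hc h1 hd
  refine ⟨h2, ?_⟩
  rw [RationalMap.toFun, RationalMap.toFun, ← mul_div_mul_left _ _ hc, hn, hd, ← map_div₀,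
    mul_div_mul_left _ _ hc]

lemma IsReal.exists_real {f : RationalMap} (hf : f.IsReal) :
    ∃ P Q : ℝ[X], Q ≠ 0 ∧ (∀ s : ℝ, f.den.eval (s : ℂ) = 0 ↔ Q.eval s = 0) ∧
      (∀ s : ℝ, f.num.eval (s : ℂ) = 0 ↔ P.eval s = 0) ∧
      (∀ s : ℝ, f.toFun s = ((P.eval s / Q.eval s : ℝ) : ℂ)) ∧
      (∀ s : ℝ, (f.num.derivative * f.den - f.num * f.den.derivative).eval (s : ℂ) = 0 ↔
        (P.derivative * Q - P * Q.derivative).eval s = 0) ∧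
      P.degree = f.num.degree ∧ Q.degree = f.den.degree := by
  obtain ⟨c, P, Q, hc, hP, hQ⟩ := hf
  have key : ∀ (p : ℂ[X]) (q : ℝ[X]), c • p = q.map (algebraMap ℝ ℂ) → ∀ s : ℝ,
      c * p.eval (s : ℂ) = (q.eval s : ℝ) := by
    intro p q hpq s
    have h1 := congrArg (Polynomial.eval (s : ℂ)) hpq
    rw [eval_smul, smul_eq_mul] at h1
    rw [h1]
    exact eval_map_apply (algebraMap ℝ ℂ) s
  have key' : ∀ (p : ℂ[X]) (q : ℝ[X]), c • p = q.map (algebraMap ℝ ℂ) →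
      c • p.derivative = q.derivative.map (algebraMap ℝ ℂ) := by
    intro p q hpq
    rw [← derivative_smul, hpq, derivative_map]
  have zero_iff : ∀ (p : ℂ[X]) (q : ℝ[X]), c • p = q.map (algebraMap ℝ ℂ) → ∀ s : ℝ,
      (p.eval (s : ℂ) = 0 ↔ q.eval s = 0) := by
    intro p q hpq s
    have := key p q hpq s
    rw [← Complex.ofReal_eq_zero, ← this, mul_eq_zero, or_iff_right hc]
  have hdeg : ∀ (p : ℂ[X]) (q : ℝ[X]), c • p = q.map (algebraMap ℝ ℂ) →
      q.degree = p.degree := by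
    intro p q hpq
    rw [← degree_map q (algebraMap ℝ ℂ), ← hpq, smul_eq_C_mul, degree_C_mul hc]
  refine ⟨P, Q, ?_, zero_iff _ _ hQ, zero_iff _ _ hP, fun s => ?_, fun s => ?_, hdeg _ _ hP,
    hdeg _ _ hQ⟩
  · rintro rfl
    rw [Polynomial.map_zero, smul_eq_zero, or_iff_right hc] at hQ
    exact f.den_ne_zero hQ
  · rw [RationalMap.toFun, ← mul_div_mul_left _ _ hc, key _ _ hP, key _ _ hQ]
    push_cast
    rfl
  · have h : c ^ 2 * (f.num.derivative * f.den - f.num * f.den.derivative).eval (s : ℂ) =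
        ((P.derivative * Q - P * Q.derivative).eval s : ℝ) := by
      simp only [eval_sub, eval_mul]
      push_cast
      rw [← key _ _ hP, ← key _ _ hQ, ← key _ _ (key' _ _ hP), ← key _ _ (key' _ _ hQ)]
      ring
    rw [← Complex.ofReal_eq_zero, ← h, mul_eq_zero, or_iff_right (pow_ne_zero 2 hc)]

/-- Points mapped into the unit disc by a rational map fixing `∞` stay in a bounded set. -/
lemma exists_bound {f : RationalMap} (hinf : f.evalInf = OnePoint.infty) :
    ∃ M : ℝ, ∀ s x : ℂ, ‖x‖ ≤ 1 → f.eval s = (x : OnePoint ℂ) → ‖s‖ ≤ M := by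
  have ho := isLittleO_cobounded_of_degree_lt (degree_lt_of_evalInf hinf)
  have hev := ho.bound (c := 1 / 2) (by norm_num)
  obtain ⟨M, hM⟩ := (Filter.HasBasis.eventually_iff
    (Metric.hasBasis_cobounded_compl_closedBall (0 : ℂ))).1 hev
  refine ⟨M, fun s x hx hs => ?_⟩
  by_contra hlt
  have h1 := hM.2 (x := s) (by simpa using hlt)
  obtain ⟨hd, hsx⟩ := eval_eq_coe_iff.1 hs
  rw [RationalMap.toFun, div_eq_iff hd] at hsx
  rw [hsx, norm_mul] at h1
  have h2 : 0 < ‖f.den.eval s‖ := norm_pos_iff.2 hd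
  nlinarith

end RationalMap

/-- A proper parametrization takes generic values exactly once. -/
lemma eventually_existsUnique {E : MvPolynomial (Fin 2) ℂ} {X Y : RationalMap}
    (hpar : IsParametrization E X Y) (hprop : IsProper E X Y)
    (hXinf : X.evalInf = OnePoint.infty) {z : ℂ} (hz : X.den.eval z ≠ 0) :
    ∀ᶠ t in 𝓝[≠] z, ∀ t', X.eval t' = (X.toFun t : OnePoint ℂ) →
      Y.eval t' = (Y.toFun t : OnePoint ℂ) → t' = t := by
  have h1 : ∀ᶠ t in 𝓝[≠] z, X.den.eval t ≠ 0 ∧ Y.den.eval t ≠ 0 ∧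
      evalE E (X.toFun t) (Y.toFun t) = 0 := by
    have := nhdsNE_le_cofinite z (Set.Finite.compl_mem_cofinite hpar)
    filter_upwards [this] with t ht
    exact not_not.1 ht
  have h2 : ∀ᶠ t in 𝓝[≠] z, X.toFun t ∉ Prod.fst '' {P : ℂ × ℂ | evalE E P.1 P.2 = 0 ∧
      ¬ ∃! s : ℂ, X.eval s = ((P.1 : ℂ) : OnePoint ℂ) ∧ Y.eval s = ((P.2 : ℂ) : OnePoint ℂ)} :=
    (RationalMap.tendsto_punctured hXinf hz).eventually
      (nhdsNE_le_cofinite _ (Set.Finite.compl_mem_cofinite (hprop.image _)))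
  filter_upwards [h1, h2] with t ht hnot t' hX hY
  have hex : ∃! s : ℂ, X.eval s = (X.toFun t : OnePoint ℂ) ∧
      Y.eval s = (Y.toFun t : OnePoint ℂ) := by
    by_contra hne
    exact hnot ⟨(X.toFun t, Y.toFun t), ⟨ht.2.2, hne⟩, rfl⟩
  exact hex.unique ⟨hX, hY⟩ ⟨RationalMap.eval_eq_coe_iff.2 ⟨ht.1, rfl⟩,
    RationalMap.eval_eq_coe_iff.2 ⟨ht.2.1, rfl⟩⟩

/-- Two points at which a proper parametrization parametrizes the same germ coincide. -/
lemma parametrizing_point_unique {E : MvPolynomial (Fin 2) ℂ} {X Y : RationalMap}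
    (hpar : IsParametrization E X Y) (hprop : IsProper E X Y)
    (hXinf : X.evalInf = OnePoint.infty) {φ : ℂ → ℂ} {a s s' : ℂ}
    (hs : X.eval s = (a : OnePoint ℂ)) (hs' : X.eval s' = (a : OnePoint ℂ))
    (hφ : ∀ᶠ t in 𝓝 s, Y.eval t = (φ (X.toFun t) : OnePoint ℂ))
    (hφ' : ∀ᶠ t in 𝓝 s', Y.eval t = (φ (X.toFun t) : OnePoint ℂ)) : s = s' := by
  by_contra hne
  obtain ⟨hd, ha⟩ := RationalMap.eval_eq_coe_iff.1 hs
  obtain ⟨hd', ha'⟩ := RationalMap.eval_eq_coe_iff.1 hs'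
  obtain ⟨U, V, hU, hV, hsU, hsV, hdisj⟩ := t2_separation hne
  have hV' : ∀ᶠ t in 𝓝 s', t ∈ V ∧ X.den.eval t ≠ 0 ∧
      Y.eval t = (φ (X.toFun t) : OnePoint ℂ) :=
    Eventually.and (hV.mem_nhds hsV) ((X.den.continuous.continuousAt.eventually_ne hd').and hφ')
  have himg : ∀ᶠ x in 𝓝 a, ∃ t' ∈ V, X.den.eval t' ≠ 0 ∧
      Y.eval t' = (φ (X.toFun t') : OnePoint ℂ) ∧ X.toFun t' = x := by
    have : map X.toFun (𝓝 s') ≥ 𝓝 a := ha' ▸ RationalMap.nhds_le_map hXinf hd'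
    refine this ?_
    rw [mem_map]
    filter_upwards [hV'] with t ht
    exact ⟨t, ht.1, ht.2.1, ht.2.2, rfl⟩
  have himg' : ∀ᶠ t in 𝓝 s, ∃ t' ∈ V, X.den.eval t' ≠ 0 ∧
      Y.eval t' = (φ (X.toFun t') : OnePoint ℂ) ∧ X.toFun t' = X.toFun t := by
    have hc := (X.analyticAt_toFun hd).continuousAt
    rw [ContinuousAt, ha] at hc
    exact hc.eventually himg
  obtain ⟨t, htuniq, htU, htφ, t', ht'V, hd'', hY, hX⟩ :=
    ((eventually_existsUnique hpar hprop hXinf hd).and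
      ((Eventually.and (hU.mem_nhds hsU) (hφ.and himg')).filter_mono
        nhdsWithin_le_nhds)).exists
  have hYt := (RationalMap.eval_eq_coe_iff.1 htφ).2
  have := htuniq t' (RationalMap.eval_eq_coe_iff.2 ⟨hd'', hX⟩) (by rw [hY, hX, hYt])
  exact disjoint_left.1 hdisj htU (this ▸ ht'V)

/-- A germ at `0` which is real on the real axis and lies on a curve with a real proper
parametrization is parametrized at some real point. -/
lemma exists_parametrizing_point {E : MvPolynomial (Fin 2) ℂ} {X Y : RationalMap}
    (hprop : IsProper E X Y) (hreal_X : X.IsReal) (hreal_Y : Y.IsReal)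
    (hXinf : X.evalInf = OnePoint.infty) {φ : ℂ → ℂ} (hφ : AnalyticAt ℂ φ 0)
    (hφreal : ∀ᶠ x : ℝ in 𝓝 0, (starRingEnd ℂ) (φ x) = φ x)
    (heq : ∀ᶠ x in 𝓝 (0 : ℂ), evalE E x (φ x) = 0) :
    ∃ s₀ : ℝ, X.eval (s₀ : ℂ) = ((0 : ℂ) : OnePoint ℂ) ∧
      ∀ᶠ t in 𝓝 (s₀ : ℂ), Y.eval t = (φ (X.toFun t) : OnePoint ℂ) := by
  have hcoe : Tendsto (fun x : ℝ => (x : ℂ)) (𝓝 0) (𝓝 0) :=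
    Complex.continuous_ofReal.tendsto' _ _ (by simp)
  have hcoe' : Tendsto (fun x : ℝ => (x : ℂ)) (𝓝[≠] 0) (𝓝[≠] 0) :=
    tendsto_nhdsWithin_iff.2 ⟨hcoe.mono_left nhdsWithin_le_nhds, by
      filter_upwards [self_mem_nhdsWithin] with x hx
      exact Complex.ofReal_ne_zero.2 hx⟩
  have hgen : ∀ᶠ x : ℝ in 𝓝[≠] 0, ∃ s : ℝ, X.eval (s : ℂ) = ((x : ℂ) : OnePoint ℂ) ∧
      Y.eval (s : ℂ) = (φ x : OnePoint ℂ) := by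
    have h2 := hcoe'.eventually
      (nhdsNE_le_cofinite _ (Set.Finite.compl_mem_cofinite (hprop.image Prod.fst)))
    filter_upwards [h2, (hcoe.eventually heq).filter_mono nhdsWithin_le_nhds,
      hφreal.filter_mono nhdsWithin_le_nhds] with x hx hxE hxr
    have hex : ∃! s : ℂ, X.eval s = ((x : ℂ) : OnePoint ℂ) ∧
        Y.eval s = (φ x : OnePoint ℂ) := by
      by_contra hne
      exact hx ⟨((x : ℂ), φ x), ⟨hxE, hne⟩, rfl⟩
    obtain ⟨s, ⟨hs1, hs2⟩, huniq⟩ := hex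
    have hconj : (starRingEnd ℂ) s = s := huniq _ ⟨by simpa using hreal_X.eval_conj hs1,
      by simpa only [hxr] using hreal_Y.eval_conj hs2⟩
    obtain ⟨r, rfl⟩ := Complex.conj_eq_iff_real.1 hconj
    exact ⟨r, hs1, hs2⟩
  obtain ⟨M, hM⟩ := RationalMap.exists_bound hXinf
  have hsmall : ∀ᶠ x : ℝ in 𝓝[≠] 0, ‖(x : ℂ)‖ ≤ 1 := by
    have : Metric.closedBall (0 : ℂ) 1 ∈ 𝓝 (0 : ℂ) := Metric.closedBall_mem_nhds _ one_pos
    filter_upwards [(hcoe.eventually this).filter_mono nhdsWithin_le_nhds] with x hx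
    simpa using hx
  obtain ⟨x, hx⟩ := exists_seq_forall_of_frequently
    ((hgen.and (hsmall.and self_mem_nhdsWithin)).frequently)
  obtain ⟨hx0, hx⟩ := hx
  choose hs' hx1 hxne using hx
  choose s hsX hsY using hs'
  have hbd : ∀ n, s n ∈ Metric.closedBall (0 : ℝ) M := fun n => by
    simpa using hM _ _ (hx1 n) (hsX n)
  obtain ⟨s₀, -, ψ, hψ, hlim⟩ := tendsto_subseq_of_bounded Metric.isBounded_closedBall hbd
  have hlimC : Tendsto (fun n => ((s (ψ n) : ℝ) : ℂ)) atTop (𝓝 (s₀ : ℂ)) :=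
    (Complex.continuous_ofReal.tendsto s₀).comp hlim
  have hxlim : Tendsto (fun n => ((x (ψ n) : ℝ) : ℂ)) atTop (𝓝 0) :=
    hcoe.comp ((hx0.mono_right nhdsWithin_le_nhds).comp hψ.tendsto_atTop)
  have hlimval : ∀ (f : RationalMap) (y : ℕ → ℂ) (l : ℂ), Tendsto y atTop (𝓝 l) →
      (∀ n, f.eval (s (ψ n) : ℂ) = (y n : OnePoint ℂ)) →
      f.den.eval (s₀ : ℂ) ≠ 0 ∧ f.toFun s₀ = l := by
    intro f y l hy hf
    have h1 : ∀ n, f.num.eval (s (ψ n) : ℂ) = y n * f.den.eval (s (ψ n) : ℂ) := fun n => by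
      obtain ⟨h, h'⟩ := RationalMap.eval_eq_coe_iff.1 (hf n)
      rwa [RationalMap.toFun, div_eq_iff h] at h'
    have h2 : f.num.eval (s₀ : ℂ) = l * f.den.eval (s₀ : ℂ) :=
      tendsto_nhds_unique (((f.num.continuous.tendsto _).comp hlimC).congr h1)
        (hy.mul ((f.den.continuous.tendsto _).comp hlimC))
    have h3 := f.den_ne_zero_of_num_eq h2
    exact ⟨h3, by rw [RationalMap.toFun, div_eq_iff h3, h2]⟩
  obtain ⟨hXd, hX0⟩ := hlimval X (fun n => x (ψ n)) 0 hxlim fun n => hsX _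
  obtain ⟨hYd, -⟩ := hlimval Y (fun n => φ (x (ψ n))) (φ 0)
    (hφ.continuousAt.tendsto.comp hxlim) fun n => hsY _
  refine ⟨s₀, RationalMap.eval_eq_coe_iff.2 ⟨hXd, hX0⟩, ?_⟩
  have hcomp : AnalyticAt ℂ (fun t => φ (X.toFun t)) s₀ :=
    AnalyticAt.fun_comp (by rwa [hX0]) (X.analyticAt_toFun hXd)
  have hne : ∀ n, s (ψ n) ≠ s₀ := fun n h => by
    have h1 := (RationalMap.eval_eq_coe_iff.1 (hsX (ψ n))).2
    rw [h, hX0] at h1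
    exact hxne (ψ n) (by exact_mod_cast h1.symm)
  have hfreq : ∃ᶠ t in 𝓝[≠] (s₀ : ℂ), Y.toFun t = φ (X.toFun t) := by
    have ht : Tendsto (fun n => ((s (ψ n) : ℝ) : ℂ)) atTop (𝓝[≠] (s₀ : ℂ)) :=
      tendsto_nhdsWithin_iff.2 ⟨hlimC, Eventually.of_forall fun n =>
        Complex.ofReal_injective.ne (hne n)⟩
    refine ht.frequently (Eventually.frequently (Eventually.of_forall fun n => ?_))
    rw [(RationalMap.eval_eq_coe_iff.1 (hsX (ψ n))).2,
      (RationalMap.eval_eq_coe_iff.1 (hsY (ψ n))).2]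
  filter_upwards [((Y.analyticAt_toFun hYd).frequently_eq_iff_eventually_eq hcomp).1 hfreq,
    Y.den.continuous.continuousAt.eventually_ne hYd] with t ht htd
  exact RationalMap.eval_eq_coe_iff.2 ⟨htd, ht⟩

lemma isClosed_setOf_convergesOn (c : ℕ → ℝ) : IsClosed {R : ℝ | ConvergesOn c R} := by
  refine isClosed_of_closure_subset fun R hR x hx => ?_
  obtain ⟨R', h1, h2⟩ := mem_closure_iff.1 hR (Ioi ‖x‖) isOpen_Ioi hx
  exact h2 x h1

lemma frequently_nhdsNE_of_eventually_left {p : ℂ → Prop} {a : ℝ}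
    (h : ∀ᶠ t : ℝ in 𝓝[<] a, p t) : ∃ᶠ z in 𝓝[≠] (a : ℂ), p z := by
  have ht : Tendsto (fun t : ℝ => (t : ℂ)) (𝓝[<] a) (𝓝[≠] (a : ℂ)) :=
    tendsto_nhdsWithin_iff.2
      ⟨(Complex.continuous_ofReal.tendsto a).mono_left nhdsWithin_le_nhds, by
        filter_upwards [self_mem_nhdsWithin] with t ht
        exact Complex.ofReal_injective.ne (ne_of_lt ht)⟩
  exact ht.frequently h.frequently

/-- Analytic continuation of the identity `Y = powerSum c ∘ X` along a real segment. -/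
lemma toFun_eq_powerSum {X Y : RationalMap} {c : ℕ → ℝ} (hc : ∀ n, 0 ≤ c n) {R s₀ s : ℝ}
    (hs : ConvergesOn c R)
    (hreg : ∀ t ∈ Ico s₀ s, X.den.eval (t : ℂ) ≠ 0 ∧ Y.den.eval (t : ℂ) ≠ 0 ∧
      ‖X.toFun t‖ < R)
    (hgerm : ∀ᶠ t in 𝓝 (s₀ : ℂ), Y.toFun t = powerSum c (X.toFun t)) {t : ℝ}
    (ht : t ∈ Ico s₀ s) : Y.toFun t = powerSum c (X.toFun t) := by
  have h1 : AnalyticOnNhd ℂ Y.toFun ((fun t : ℝ => (t : ℂ)) '' Ico s₀ s) := by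
    rintro _ ⟨u, hu, rfl⟩
    exact Y.analyticAt_toFun (hreg u hu).2.1
  have h2 : AnalyticOnNhd ℂ (fun t => powerSum c (X.toFun t))
      ((fun t : ℝ => (t : ℂ)) '' Ico s₀ s) := by
    rintro _ ⟨u, hu, rfl⟩
    exact AnalyticAt.fun_comp (hs.analyticAt hc (hreg u hu).2.2)
      (X.analyticAt_toFun (hreg u hu).1)
  exact h1.eqOn_of_preconnected_of_eventuallyEq h2
    (isPreconnected_Ico.image _ Complex.continuous_ofReal.continuousOn)
    ⟨s₀, ⟨le_rfl, ht.1.trans_lt ht.2⟩, rfl⟩ hgerm ⟨t, ht, rfl⟩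

/-- At a noncritical point `σ` with positive value `R = X(σ)`, convergence up to `R` extends
beyond `R`. -/
lemma exists_summable_gt_of_regular {X Y : RationalMap} {c : ℕ → ℝ} (hc : ∀ n, 0 ≤ c n)
    {R s₀ σ : ℝ} (hR : 0 < R) (hσ : s₀ < σ) (hs : ConvergesOn c R) (hXσ : X.toFun σ = R)
    (hXd : X.den.eval (σ : ℂ) ≠ 0) (hYd : Y.den.eval (σ : ℂ) ≠ 0)
    (hder : deriv X.toFun (σ : ℂ) ≠ 0)
    (hreg : ∀ t ∈ Ico s₀ σ, X.den.eval (t : ℂ) ≠ 0 ∧ Y.den.eval (t : ℂ) ≠ 0 ∧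
      ‖X.toFun t‖ < R)
    (hgerm : ∀ᶠ t in 𝓝 (s₀ : ℂ), Y.toFun t = powerSum c (X.toFun t)) :
    ∃ b, R < b ∧ Summable (fun n : ℕ => c n * b ^ n) := by
  have hXa := X.analyticAt_toFun hXd
  set ρ : ℂ → ℂ := hXa.hasStrictDerivAt.localInverse _ _ _ hder with hρ
  have hρa : AnalyticAt ℂ ρ R := hXσ ▸ hXa.analyticAt_localInverse hder
  have hleft : ∀ᶠ z in 𝓝 (σ : ℂ), ρ (X.toFun z) = z :=
    hXa.hasStrictDerivAt.eventually_left_inverse hder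
  have hright : ∀ᶠ x in 𝓝 (R : ℂ), X.toFun (ρ x) = x := by
    have := hXa.hasStrictDerivAt.eventually_right_inverse hder
    rwa [hXσ] at this
  have hρR : ρ R = σ := by rw [← hXσ]; exact hleft.self_of_nhds
  have hYρ : AnalyticAt ℂ (fun x => Y.toFun (ρ x)) R :=
    AnalyticAt.fun_comp (by rw [hρR]; exact Y.analyticAt_toFun hYd) hρa
  obtain ⟨ε, hε, hball⟩ := Metric.eventually_nhds_iff_ball.1
    (hYρ.eventually_analyticAt.and (hρa.eventually_analyticAt.and hright))
  refine hs.exists_summable_gt hc hR hε (fun w hw => (hball w hw).1) ?_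
  have hlim : Tendsto (fun t : ℝ => (t : ℂ)) (𝓝[<] σ) (𝓝 (σ : ℂ)) :=
    (Complex.continuous_ofReal.tendsto σ).mono_left nhdsWithin_le_nhds
  have hXball : ∀ᶠ z in 𝓝 (σ : ℂ), X.toFun z ∈ Metric.ball (R : ℂ) ε := by
    have h := hXa.continuousAt
    rw [ContinuousAt, hXσ] at h
    exact h.eventually (Metric.ball_mem_nhds _ hε)
  obtain ⟨t, ⟨htl, htb⟩, ht⟩ := ((hlim.eventually (hleft.and hXball)).and
    (Ioo_mem_nhdsLT hσ)).exists
  have htI : t ∈ Ico s₀ σ := ⟨ht.1.le, ht.2⟩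
  have hgerm_t : ∀ᶠ z in 𝓝 (t : ℂ), Y.toFun z = powerSum c (X.toFun z) := by
    refine ((Y.analyticAt_toFun (hreg t htI).2.1).frequently_eq_iff_eventually_eq
      (AnalyticAt.fun_comp (hs.analyticAt hc (hreg t htI).2.2)
        (X.analyticAt_toFun (hreg t htI).1))).1 (frequently_nhdsNE_of_eventually_left ?_)
    filter_upwards [Ioo_mem_nhdsLT ht.1] with u hu
    exact toFun_eq_powerSum hc hs hreg hgerm ⟨hu.1.le, hu.2.trans ht.2⟩
  have hfin : ∀ᶠ x in 𝓝 (X.toFun t), Y.toFun (ρ x) = powerSum c x := by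
    have h1 : ∀ᶠ x in 𝓝 (X.toFun t), X.toFun (ρ x) = x := by
      filter_upwards [Metric.isOpen_ball.mem_nhds htb] with x hx
      exact (hball x hx).2.2
    have h2 : Tendsto ρ (𝓝 (X.toFun t)) (𝓝 (t : ℂ)) := by
      have := (hball _ htb).2.1.continuousAt.tendsto
      rwa [htl] at this
    filter_upwards [h1, h2.eventually hgerm_t] with x hx1 hx2
    rw [hx2, hx1]
  have hconn : IsPreconnected (Metric.ball (0 : ℂ) R ∩ Metric.ball (R : ℂ) ε) :=
    ((convex_ball _ _).inter (convex_ball _ _)).isPreconnected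
  intro x hx hxb
  refine AnalyticOnNhd.eqOn_of_preconnected_of_eventuallyEq
    (f := fun x => Y.toFun (ρ x)) (g := powerSum c) (fun w hw => (hball w hw.2).1)
    (fun w hw => hs.analyticAt hc (by simpa using hw.1)) hconn (z₀ := X.toFun t)
    ⟨by simpa using (hreg t htI).2.2, htb⟩ hfin ⟨by simpa using hx, hxb⟩

/-- Convergence up to every value taken by `X` on a critical-point-free real interval. -/
lemma convergesOn_of_regular {X Y : RationalMap} {c : ℕ → ℝ} (hc : ∀ n, 0 ≤ c n)
    {r s₀ b : ℝ} (hr : 0 < r) (hcr : ConvergesOn c r) {ξ : ℝ → ℝ}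
    (hξ : ∀ t : ℝ, X.toFun t = ξ t) (hξ0 : ξ s₀ = 0)
    (hmono : StrictMonoOn ξ (Ico s₀ b)) (hcont : ∀ t ∈ Ico s₀ b, ContinuousAt ξ t)
    (hreg : ∀ t ∈ Ico s₀ b, X.den.eval (t : ℂ) ≠ 0 ∧ Y.den.eval (t : ℂ) ≠ 0 ∧
      deriv X.toFun (t : ℂ) ≠ 0)
    (hgerm : ∀ᶠ t in 𝓝 (s₀ : ℂ), Y.toFun t = powerSum c (X.toFun t)) {t : ℝ}
    (ht : t ∈ Ico s₀ b) : ConvergesOn c (ξ t) := by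
  have hsub : ∀ u ∈ Icc s₀ t, u ∈ Ico s₀ b := fun u hu => ⟨hu.1, hu.2.trans_lt ht.2⟩
  have h0b : s₀ ∈ Ico s₀ b := hsub _ ⟨le_rfl, ht.1⟩
  have hcl : IsClosed (ξ ⁻¹' {R | ConvergesOn c R} ∩ Icc s₀ t) := by
    rw [inter_comm]
    exact ContinuousOn.preimage_isClosed_of_isClosed
      (fun u hu => (hcont u (hsub u hu)).continuousWithinAt) isClosed_Icc
      (isClosed_setOf_convergesOn c)
  refine hcl.Icc_subset_of_forall_exists_gt ?_ ?_ ⟨ht.1, le_rfl⟩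
  · intro x hx
    rw [hξ0] at hx
    exact absurd hx (not_lt.2 (norm_nonneg x))
  · rintro v ⟨hv, hvI⟩ y hy
    have hvb := hsub v ⟨hvI.1, hvI.2.le⟩
    obtain ⟨R', hR', hconv⟩ : ∃ R', ξ v < R' ∧ ConvergesOn c R' := by
      rcases eq_or_lt_of_le hvI.1 with rfl | hlt
      · exact ⟨r, by rwa [hξ0], hcr⟩
      · have hreg' : ∀ u ∈ Ico s₀ v, X.den.eval (u : ℂ) ≠ 0 ∧ Y.den.eval (u : ℂ) ≠ 0 ∧
            ‖X.toFun u‖ < ξ v := by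
          intro u hu
          have hub : u ∈ Ico s₀ b := ⟨hu.1, hu.2.trans hvb.2⟩
          refine ⟨(hreg u hub).1, (hreg u hub).2.1, ?_⟩
          have h0 : 0 ≤ ξ u := hξ0 ▸ hmono.monotoneOn h0b hub hu.1
          rw [hξ, Complex.norm_real, Real.norm_of_nonneg h0]
          exact hmono hub hvb hu.2
        obtain ⟨R', h1, h2⟩ := exists_summable_gt_of_regular hc
          (hξ0 ▸ hmono h0b hvb hlt) hlt hv (hξ v) (hreg v hvb).1 (hreg v hvb).2.1
          (hreg v hvb).2.2 hreg' hgerm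
        exact ⟨R', h1, convergesOn_of_summable hc h2⟩
    have hev : ∀ᶠ w in 𝓝[>] v, ξ w < R' :=
      ((hcont v hvb).eventually (gt_mem_nhds hR')).filter_mono nhdsWithin_le_nhds
    obtain ⟨w, hw, hwI⟩ := (hev.and (Ioc_mem_nhdsGT hy)).exists
    exact ⟨w, fun x hx => hconv x (hx.trans hw), hwI⟩

/-- Near a pole of `P / Q`, a rational function `U / V` cannot dominate high powers of `P / Q`. -/
lemma coeff_nonpos_of_pole {P Q U V : ℝ[X]} {s₀ s₁ a : ℝ} {n : ℕ} (hs : s₀ < s₁) (hV : V ≠ 0)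
    (hQ : Q.eval s₁ = 0) (hP : P.eval s₁ ≠ 0) (hn : V.rootMultiplicity s₁ < n)
    (h : ∀ t ∈ Ico s₀ s₁, a * |P.eval t| ^ n * |V.eval t| ≤ |U.eval t| * |Q.eval t| ^ n) :
    a ≤ 0 := by
  obtain ⟨W, hVW, hW⟩ := exists_eq_pow_rootMultiplicity_mul_and_not_dvd V hV s₁
  set m := V.rootMultiplicity s₁ with hm
  rw [dvd_iff_isRoot, IsRoot.def] at hW
  obtain ⟨Q₁, rfl⟩ := dvd_iff_isRoot.2 hQ
  obtain ⟨k, rfl⟩ := Nat.exists_eq_add_of_lt hn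
  have hle : ∀ᶠ t in 𝓝[<] s₁, a * |P.eval t| ^ (m + k + 1) * |W.eval t| ≤
      |U.eval t| * |Q₁.eval t| ^ (m + k + 1) * |t - s₁| ^ (k + 1) := by
    filter_upwards [Ioo_mem_nhdsLT hs] with t ht
    have h1 := h t ⟨ht.1.le, ht.2⟩
    have hpos : 0 < |t - s₁| ^ m := pow_pos (abs_pos.2 (sub_ne_zero.2 ht.2.ne)) m
    rw [hVW] at h1
    simp only [eval_mul, eval_pow, eval_sub, eval_X, eval_C, abs_mul, abs_pow, mul_pow] at h1
    refine le_of_mul_le_mul_right ?_ hpos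
    calc _ = a * |P.eval t| ^ (m + k + 1) * (|t - s₁| ^ m * |W.eval t|) := by ring
      _ ≤ _ := h1
      _ = _ := by ring
  have hl : Tendsto (fun t => a * |P.eval t| ^ (m + k + 1) * |W.eval t|) (𝓝[<] s₁)
      (𝓝 (a * |P.eval s₁| ^ (m + k + 1) * |W.eval s₁|)) :=
    (Continuous.tendsto (by fun_prop) s₁).mono_left nhdsWithin_le_nhds
  have hr : Tendsto (fun t => |U.eval t| * |Q₁.eval t| ^ (m + k + 1) * |t - s₁| ^ (k + 1))
      (𝓝[<] s₁) (𝓝 0) :=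
    (Continuous.tendsto' (by fun_prop) s₁ _ (by simp)).mono_left nhdsWithin_le_nhds
  have hfin := le_of_tendsto_of_tendsto hl hr hle
  have hpos : 0 < |P.eval s₁| ^ (m + k + 1) * |W.eval s₁| := by positivity
  rw [mul_assoc] at hfin
  exact nonpos_of_mul_nonpos_left hfin hpos

/-- At infinity, a rational function `U / V` cannot dominate high powers of `P / Q` when
`deg Q < deg P`. -/
lemma coeff_nonpos_of_infinity {P Q U V : ℝ[X]} {s₀ a : ℝ} {n : ℕ} (hV : V ≠ 0) (hQ0 : Q ≠ 0)
    (hdeg : Q.degree < P.degree) (hn : U.natDegree < n)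
    (h : ∀ t, s₀ ≤ t → a * |P.eval t| ^ n * |V.eval t| ≤ |U.eval t| * |Q.eval t| ^ n) :
    a ≤ 0 := by
  have hP : P ≠ 0 := ne_zero_of_degree_gt hdeg
  have hnd : (U * Q ^ n).degree < (V * P ^ n).degree := by
    apply degree_lt_degree
    have h1 : Q.natDegree + 1 ≤ P.natDegree := natDegree_lt_natDegree hQ0 hdeg
    calc (U * Q ^ n).natDegree ≤ U.natDegree + n * Q.natDegree :=
          natDegree_mul_le.trans (by gcongr; exact natDegree_pow_le)
      _ < n + n * Q.natDegree := by gcongr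
      _ = n * (Q.natDegree + 1) := by ring
      _ ≤ n * P.natDegree := by gcongr
      _ ≤ V.natDegree + n * P.natDegree := Nat.le_add_left _ _
      _ = (V * P ^ n).natDegree := by
          rw [natDegree_mul hV (pow_ne_zero _ hP), natDegree_pow]
  by_contra! ha
  have hb := (isLittleO_atTop_of_degree_lt _ _ hnd).bound (half_pos ha)
  have hne : ∀ᶠ t in atTop, (V * P ^ n).eval t ≠ 0 :=
    eventually_atTop_not_isRoot _ (mul_ne_zero hV (pow_ne_zero _ hP))
  obtain ⟨t, ht1, ht2, ht3⟩ := (hb.and (hne.and (eventually_ge_atTop s₀))).exists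
  have h1 := h t ht3
  have h2 := abs_pos.2 ht2
  simp only [eval_mul, eval_pow, Real.norm_eq_abs, abs_mul, abs_pow] at ht1 h2
  nlinarith

/-- At a critical point, the germ `Y ∘ X⁻¹` coming from the left has no analytic continuation. -/
lemma not_eventually_left_eq_comp_of_isCriticalPt {E : MvPolynomial (Fin 2) ℂ}
    {X Y : RationalMap} (hpar : IsParametrization E X Y) (hprop : IsProper E X Y)
    (hXinf : X.evalInf = OnePoint.infty) {σ : ℝ} (hX : X.den.eval (σ : ℂ) ≠ 0)
    (hcrit : IsCriticalPt X Y σ) {g : ℂ → ℂ} (hg : AnalyticAt ℂ g (X.toFun σ)) :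
    ¬ ∀ᶠ t : ℝ in 𝓝[<] σ, Y.den.eval (t : ℂ) ≠ 0 ∧ Y.toFun t = g (X.toFun t) := by
  intro h
  have hXa := X.analyticAt_toFun hX
  have hgX : AnalyticAt ℂ (fun z => g (X.toFun z)) σ := AnalyticAt.fun_comp hg hXa
  have hev : ∀ᶠ z in 𝓝 (σ : ℂ), Y.num.eval z = g (X.toFun z) * Y.den.eval z := by
    refine ((Y.num.differentiable.analyticAt _).frequently_eq_iff_eventually_eq
      (hgX.mul (Y.den.differentiable.analyticAt _))).1 ?_
    refine (frequently_nhdsNE_of_eventually_left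
      (p := fun z => Y.den.eval z ≠ 0 ∧ Y.toFun z = g (X.toFun z)) h).mono ?_
    rintro z ⟨hz, hzg⟩
    change Y.num.eval z = g (X.toFun z) * Y.den.eval z
    rw [← hzg, RationalMap.toFun, div_mul_cancel₀ _ hz]
  have hYσ : Y.den.eval (σ : ℂ) ≠ 0 := Y.den_ne_zero_of_num_eq hev.self_of_nhds
  have hder : deriv X.toFun (σ : ℂ) = 0 := by
    rw [(X.hasDerivAt_toFun hX).deriv, hcrit.resolve_right hYσ, zero_div]
  have hY : ∀ᶠ z in 𝓝 (σ : ℂ), Y.toFun z = g (X.toFun z) ∧ X.den.eval z ≠ 0 ∧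
      Y.den.eval z ≠ 0 := by
    filter_upwards [hev, Y.den.continuous.continuousAt.eventually_ne hYσ,
      X.den.continuous.continuousAt.eventually_ne hX] with z h1 h2 h3
    exact ⟨by rw [RationalMap.toFun, h1, mul_div_cancel_right₀ _ h2], h3, h2⟩
  have huniq := eventually_nhdsWithin_iff.1 (eventually_existsUnique hpar hprop hXinf hX)
  refine hXa.not_injOn_of_deriv_eq_zero hder (RationalMap.not_eventually_const hXinf _ hX)
    (hY.and huniq) ?_
  rintro t ⟨⟨ht, hut⟩, htσ⟩ t' ⟨⟨ht', -⟩, -⟩ htt'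
  refine (hut htσ t' (RationalMap.eval_eq_coe_iff.2 ⟨ht'.2.1, htt'.symm⟩)
    (RationalMap.eval_eq_coe_iff.2 ⟨ht'.2.2, ?_⟩)).symm
  rw [ht'.1, ht.1, htt']

lemma hasDerivAt_eval_div {P Q : ℝ[X]} {t : ℝ} (h : Q.eval t ≠ 0) :
    HasDerivAt (fun s => P.eval s / Q.eval s)
      ((derivative P * Q - P * derivative Q).eval t / Q.eval t ^ 2) t := by
  have := (P.hasDerivAt t).div (Q.hasDerivAt t) h
  simpa using! this

lemma strictMonoOn_eval_div {P Q : ℝ[X]} {D : Set ℝ} (hD : Convex ℝ D)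
    (hQ : ∀ t ∈ D, Q.eval t ≠ 0)
    (hW : ∀ t ∈ interior D, 0 < (derivative P * Q - P * derivative Q).eval t) :
    StrictMonoOn (fun s => P.eval s / Q.eval s) D := by
  refine strictMonoOn_of_deriv_pos hD
    (fun t ht => (hasDerivAt_eval_div (hQ t ht)).continuousAt.continuousWithinAt) fun t ht => ?_
  have hQt := hQ t (interior_subset ht)
  rw [(hasDerivAt_eval_div hQt).deriv]
  exact div_pos (hW t ht) (by positivity)

lemma eval_pos_of_forall_ne_zero {W : ℝ[X]} {a b : ℝ} (ha : 0 < W.eval a)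
    (h : ∀ t ∈ Ico a b, W.eval t ≠ 0) {t : ℝ} (ht : t ∈ Ico a b) : 0 < W.eval t := by
  by_contra! hle
  obtain ⟨u, hu, hu0⟩ := intermediate_value_Icc' ht.1 W.continuous.continuousOn ⟨hle, ha.le⟩
  exact h u ⟨hu.1, hu.2.trans_lt ht.2⟩ hu0

/-- On a real interval free of critical points and poles, `Y = powerSum c ∘ X`, with convergence
of the power series up to the values of `X`. -/
lemma powerSum_eq_of_regular {X Y : RationalMap} {c : ℕ → ℝ} (hc : ∀ n, 0 ≤ c n)
    {r s₀ b : ℝ} (hr : 0 < r) (hcr : ConvergesOn c r) {P Q : ℝ[X]}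
    (hξ : ∀ t : ℝ, X.toFun t = ((P.eval t / Q.eval t : ℝ) : ℂ)) (hξ0 : P.eval s₀ / Q.eval s₀ = 0)
    (hQ : ∀ t ∈ Ico s₀ b, Q.eval t ≠ 0)
    (hW : ∀ t ∈ Ico s₀ b, 0 < (derivative P * Q - P * derivative Q).eval t)
    (hreg : ∀ t ∈ Ico s₀ b, X.den.eval (t : ℂ) ≠ 0 ∧ Y.den.eval (t : ℂ) ≠ 0 ∧
      deriv X.toFun (t : ℂ) ≠ 0)
    (hgerm : ∀ᶠ t in 𝓝 (s₀ : ℂ), Y.toFun t = powerSum c (X.toFun t)) {t : ℝ}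
    (ht : t ∈ Ico s₀ b) :
    ConvergesOn c (P.eval t / Q.eval t) ∧ 0 ≤ P.eval t / Q.eval t ∧
      Y.toFun t = powerSum c (X.toFun t) ∧
      Summable (fun n => c n * (P.eval t / Q.eval t) ^ n) := by
  have hmono := strictMonoOn_eval_div (convex_Ico s₀ b) hQ
    fun t ht => hW t (interior_subset ht)
  have hconv : ∀ {t : ℝ}, t ∈ Ico s₀ b → ConvergesOn c (P.eval t / Q.eval t) := fun ht =>
    convergesOn_of_regular hc hr hcr (ξ := fun s => P.eval s / Q.eval s) hξ hξ0 hmono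
      (fun t ht => (hasDerivAt_eval_div (hQ t ht)).continuousAt) hreg hgerm ht
  have hnonneg : ∀ {t : ℝ}, t ∈ Ico s₀ b → 0 ≤ P.eval t / Q.eval t := fun {t} ht =>
    hξ0 ▸ hmono.monotoneOn ⟨le_rfl, ht.1.trans_lt ht.2⟩ ht ht.1
  obtain ⟨v, htv, hvb⟩ := exists_between ht.2
  have hv : v ∈ Ico s₀ b := ⟨ht.1.trans htv.le, hvb⟩
  have hlt : ∀ u ∈ Ico s₀ v, ‖X.toFun u‖ < P.eval v / Q.eval v := by
    intro u hu
    have hub : u ∈ Ico s₀ b := ⟨hu.1, hu.2.trans hvb⟩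
    rw [hξ, Complex.norm_real, Real.norm_of_nonneg (hnonneg hub)]
    exact hmono hub hv hu.2
  refine ⟨hconv ht, hnonneg ht, toFun_eq_powerSum hc (hconv hv) (fun u hu => ?_) hgerm
    ⟨ht.1, htv⟩, ?_⟩
  · have hub : u ∈ Ico s₀ b := ⟨hu.1, hu.2.trans hvb⟩
    exact ⟨(hreg u hub).1, (hreg u hub).2.1, hlt u hu⟩
  · refine summable_complex_iff_real.1 (hconv hv _ ?_)
    rw [← hξ]
    exact hlt t ⟨ht.1, htv⟩

/-- Each term of the series is dominated by its sum, written without denominators. -/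
lemma coeff_mul_le_of_powerSum_eq {c : ℕ → ℝ} (hc : ∀ n, 0 ≤ c n) {p q u v : ℝ}
    (hq : q ≠ 0) (hv : v ≠ 0) (hpq : 0 ≤ p / q) (hs : Summable (fun n => c n * (p / q) ^ n))
    (h : ((u / v : ℝ) : ℂ) = powerSum c ((p / q : ℝ) : ℂ)) (n : ℕ) :
    c n * |p| ^ n * |v| ≤ |u| * |q| ^ n := by
  have hsum : u / v = ∑' n, c n * (p / q) ^ n := by
    have : powerSum c ((p / q : ℝ) : ℂ) = ((∑' n, c n * (p / q) ^ n : ℝ) : ℂ) := by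
      rw [powerSum, Complex.ofReal_tsum]
      push_cast
      rfl
    exact_mod_cast h.trans this
  have hle : c n * (p / q) ^ n ≤ |u / v| :=
    (hs.le_tsum n fun m _ => mul_nonneg (hc m) (pow_nonneg hpq m)).trans
      (hsum ▸ le_abs_self _)
  rw [← abs_of_nonneg hpq, abs_div, abs_div, div_pow, ← mul_div_assoc,
    div_le_div_iff₀ (by positivity) (by positivity)] at hle
  exact hle

/-- Along a parametrization of a power series with nonnegative coefficients, the first critical
point to the right of the base point exists and gives the dominant singularity. -/
lemma exists_isLeast_critical_of_germ {E : MvPolynomial (Fin 2) ℂ} {X Y : RationalMap}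
    (hpar : IsParametrization E X Y) (hprop : IsProper E X Y)
    (hreal_X : X.IsReal) (hreal_Y : Y.IsReal) (hXinf : X.evalInf = OnePoint.infty)
    {c : ℕ → ℝ} {r s₀ : ℝ} (hr : 0 < r) (hcr : ConvergesOn c r) (hc : ∀ n, 0 ≤ c n)
    (hnonpoly : ∀ N : ℕ, ∃ n : ℕ, N ≤ n ∧ c n ≠ 0)
    (hX0 : X.eval (s₀ : ℂ) = ((0 : ℂ) : OnePoint ℂ)) (hY0 : Y.den.eval (s₀ : ℂ) ≠ 0)
    (hgerm : ∀ᶠ t in 𝓝 (s₀ : ℂ), Y.toFun t = powerSum c (X.toFun t))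
    (hd : ∃ d : ℝ, deriv X.toFun (s₀ : ℂ) = (d : ℂ) ∧ 0 < d) :
    ∃ sc : ℝ, IsLeast {s : ℝ | s₀ ≤ s ∧ IsCriticalPt X Y (s : ℂ)} sc ∧
      ∃ xc : ℝ, X.toFun (sc : ℂ) = (xc : ℂ) ∧ 0 < xc ∧ ConvergesOn c xc ∧
        (∀ x : ℝ, xc < x → ¬ Summable (fun n : ℕ => c n * x ^ n)) ∧
        (¬ ∃ (g : ℂ → ℂ) (ε : ℝ), 0 < ε ∧
            (∀ w ∈ Metric.ball (xc : ℂ) ε, AnalyticAt ℂ g w) ∧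
            ∀ x : ℂ, ‖x‖ < xc → x ∈ Metric.ball (xc : ℂ) ε → g x = powerSum c x) := by
  obtain ⟨P, Q, hQ0, hQ, hP, hξ, hW, hPdeg, hQdeg⟩ := hreal_X.exists_real
  obtain ⟨U, V, hV0, hV, -, hη, -⟩ := hreal_Y.exists_real
  obtain ⟨hXd0, hX0⟩ := RationalMap.eval_eq_coe_iff.1 hX0
  have hξ0 : P.eval s₀ / Q.eval s₀ = 0 := by
    rw [hξ] at hX0
    exact_mod_cast hX0
  have hQs₀ : Q.eval s₀ ≠ 0 := mt (hQ s₀).2 hXd0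
  set W : ℝ[X] := derivative P * Q - P * derivative Q
  have hW0 : 0 < W.eval s₀ := by
    obtain ⟨d, hd, hdpos⟩ := hd
    have h1 : HasDerivAt (fun t : ℝ => X.toFun t) (d : ℂ) s₀ :=
      (hd ▸ (X.analyticAt_toFun hXd0).differentiableAt.hasDerivAt).comp_ofReal
    have h2 := (hasDerivAt_eval_div (P := P) hQs₀).ofReal_comp
    simp only [← hξ] at h2
    have h3 : d = W.eval s₀ / Q.eval s₀ ^ 2 := Complex.ofReal_injective (h1.unique h2)
    rw [h3] at hdpos
    exact (div_pos_iff_of_pos_right (by positivity)).1 hdpos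
  have key : ∀ b, (∀ t ∈ Ico s₀ b, Q.eval t ≠ 0 ∧ V.eval t ≠ 0 ∧ W.eval t ≠ 0) →
      ∀ t ∈ Ico s₀ b, 0 < W.eval t ∧ ConvergesOn c (P.eval t / Q.eval t) ∧
        0 ≤ P.eval t / Q.eval t ∧ Y.toFun t = powerSum c (X.toFun t) ∧
        ∀ n, c n * |P.eval t| ^ n * |V.eval t| ≤ |U.eval t| * |Q.eval t| ^ n := by
    intro b hb t ht
    have hWpos : ∀ t ∈ Ico s₀ b, 0 < W.eval t := fun t ht =>
      eval_pos_of_forall_ne_zero hW0 (fun u hu => (hb u hu).2.2) ht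
    have hreg : ∀ t ∈ Ico s₀ b, X.den.eval (t : ℂ) ≠ 0 ∧ Y.den.eval (t : ℂ) ≠ 0 ∧
        deriv X.toFun (t : ℂ) ≠ 0 := by
      intro t ht
      have hXt : X.den.eval (t : ℂ) ≠ 0 := mt (hQ t).1 (hb t ht).1
      refine ⟨hXt, mt (hV t).1 (hb t ht).2.1, ?_⟩
      rw [(X.hasDerivAt_toFun hXt).deriv]
      exact div_ne_zero (mt (hW t).1 (hb t ht).2.2) (pow_ne_zero _ hXt)
    obtain ⟨h1, h2, h3, h4⟩ := powerSum_eq_of_regular hc hr hcr hξ hξ0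
      (fun t ht => (hb t ht).1) hWpos hreg hgerm ht
    exact ⟨hWpos t ht, h1, h2, h3, coeff_mul_le_of_powerSum_eq hc (hb t ht).1 (hb t ht).2.1 h2 h4
      (by rw [← hη, ← hξ, h3])⟩
  have hcpos : ∀ N, ∃ n, N < n ∧ 0 < c n := fun N =>
    let ⟨n, hn, h⟩ := hnonpoly (N + 1)
    ⟨n, hn, (hc n).lt_of_ne' h⟩
  set T : Set ℝ := {s | s₀ ≤ s ∧ (Q * V * W).eval s = 0}
  have hTmem : ∀ s, s₀ ≤ s → s ∉ T → Q.eval s ≠ 0 ∧ V.eval s ≠ 0 ∧ W.eval s ≠ 0 := by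
    intro s hs hsT
    have : (Q * V * W).eval s ≠ 0 := fun h => hsT ⟨hs, h⟩
    simpa [not_or, and_assoc] using this
  have hTne : T.Nonempty := by
    by_contra hempty
    rw [not_nonempty_iff_eq_empty] at hempty
    obtain ⟨n, hn, hcn⟩ := hcpos U.natDegree
    refine hcn.not_ge (coeff_nonpos_of_infinity (P := P) (s₀ := s₀) hV0 hQ0 ?_ hn fun t ht => ?_)
    · rw [hPdeg, hQdeg]
      exact RationalMap.degree_lt_of_evalInf hXinf
    · exact (key (t + 1) (fun u hu => hTmem u hu.1 (by simp [hempty])) t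
        ⟨ht, lt_add_one t⟩).2.2.2.2 n
  have hTbdd : BddBelow T := ⟨s₀, fun s hs => hs.1⟩
  have hTclosed : IsClosed T :=
    isClosed_Ici.inter (isClosed_singleton.preimage (Q * V * W).continuous)
  set σ := sInf T
  have hσT : σ ∈ T := hTclosed.csInf_mem hTne hTbdd
  have hreg : ∀ t ∈ Ico s₀ σ, Q.eval t ≠ 0 ∧ V.eval t ≠ 0 ∧ W.eval t ≠ 0 := fun t ht =>
    hTmem t ht.1 (notMem_of_lt_csInf ht.2 hTbdd)
  have hs₀σ : s₀ < σ := by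
    refine lt_of_le_of_ne hσT.1 fun h => ?_
    have h0 := hσT.2
    rw [← h] at h0
    have : V.eval s₀ ≠ 0 := mt (hV s₀).2 hY0
    simp only [eval_mul] at h0
    exact mul_ne_zero (mul_ne_zero hQs₀ this) hW0.ne' h0
  have hkey := key σ hreg
  have hQσ : Q.eval σ ≠ 0 := by
    intro h
    obtain ⟨n, hn, hcn⟩ := hcpos (V.rootMultiplicity σ)
    exact hcn.not_ge (coeff_nonpos_of_pole hs₀σ hV0 h
      (mt (hP σ).2 (X.num_ne_zero_of_den_eq_zero ((hQ σ).2 h))) hn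
      fun t ht => (hkey t ht).2.2.2.2 n)
  have hXσ : X.den.eval (σ : ℂ) ≠ 0 := mt (hQ σ).1 hQσ
  have hcrit : IsCriticalPt X Y (σ : ℂ) := by
    have h0 := hσT.2
    simp only [eval_mul, mul_eq_zero, hQσ, false_or] at h0
    exact h0.symm.imp (hW σ).2 (hV σ).2
  have hmono : StrictMonoOn (fun s => P.eval s / Q.eval s) (Icc s₀ σ) := by
    refine strictMonoOn_eval_div (convex_Icc _ _) (fun t ht => ?_) fun t ht => ?_
    · rcases ht.2.eq_or_lt with rfl | h
      · exact hQσ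
      · exact (hreg t ⟨ht.1, h⟩).1
    · rw [interior_Icc] at ht
      exact (hkey t ⟨ht.1.le, ht.2⟩).1
  have hpos : 0 < P.eval σ / Q.eval σ :=
    hξ0 ▸ hmono ⟨le_rfl, hs₀σ.le⟩ ⟨hs₀σ.le, le_rfl⟩ hs₀σ
  have hlim : Tendsto (fun t => P.eval t / Q.eval t) (𝓝[<] σ) (𝓝 (P.eval σ / Q.eval σ)) :=
    (hasDerivAt_eval_div hQσ).continuousAt.tendsto.mono_left nhdsWithin_le_nhds
  have hconv : ConvergesOn c (P.eval σ / Q.eval σ) := by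
    refine (isClosed_setOf_convergesOn c).mem_of_tendsto hlim ?_
    filter_upwards [Ioo_mem_nhdsLT hs₀σ] with t ht
    exact (hkey t ⟨ht.1.le, ht.2⟩).2.1
  have hcont : ¬ ∃ (g : ℂ → ℂ) (ε : ℝ), 0 < ε ∧
      (∀ w ∈ Metric.ball ((P.eval σ / Q.eval σ : ℝ) : ℂ) ε, AnalyticAt ℂ g w) ∧
      ∀ x : ℂ, ‖x‖ < P.eval σ / Q.eval σ →
        x ∈ Metric.ball ((P.eval σ / Q.eval σ : ℝ) : ℂ) ε → g x = powerSum c x := by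
    rintro ⟨g, ε, hε, hg, hgc⟩
    refine not_eventually_left_eq_comp_of_isCriticalPt hpar hprop hXinf hXσ hcrit (g := g)
      (hξ σ ▸ hg _ (Metric.mem_ball_self hε)) ?_
    filter_upwards [Ioo_mem_nhdsLT hs₀σ, (Complex.continuous_ofReal.tendsto _).comp hlim
      |>.eventually (Metric.ball_mem_nhds _ hε)] with t ht htb
    have htI : t ∈ Ico s₀ σ := ⟨ht.1.le, ht.2⟩
    refine ⟨mt (hV t).1 (hreg t htI).2.1, ?_⟩
    rw [(hkey t htI).2.2.2.1, hgc _ _ (by rw [hξ]; exact htb)]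
    rw [hξ, Complex.norm_real, Real.norm_of_nonneg (hkey t htI).2.2.1]
    exact hmono ⟨htI.1, htI.2.le⟩ ⟨hs₀σ.le, le_rfl⟩ ht.2
  refine ⟨σ, ⟨⟨hs₀σ.le, hcrit⟩, fun s hs => csInf_le hTbdd ⟨hs.1, ?_⟩⟩, _, hξ σ, hpos, hconv,
    fun x hx hsum => hcont ⟨powerSum c, x - P.eval σ / Q.eval σ, sub_pos.2 hx, fun w hw => ?_,
      fun _ _ _ => rfl⟩, hcont⟩
  · rcases hs.2 with h | h
    · simp only [eval_mul, (hW s).1 h, mul_zero]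
    · simp only [eval_mul, (hV s).1 h, mul_zero, zero_mul]
  · refine (convergesOn_of_summable hc hsum).analyticAt hc ?_
    have h1 : ‖w - ((P.eval σ / Q.eval σ : ℝ) : ℂ)‖ < x - P.eval σ / Q.eval σ := by
      simpa only [Metric.mem_ball, dist_eq_norm] using hw
    have h2 := norm_le_norm_sub_add w ((P.eval σ / Q.eval σ : ℝ) : ℂ)
    rw [Complex.norm_real, Real.norm_of_nonneg hpos.le] at h2
    linarith

/-- Proposition `RP dom sing` (i)-(ii): let `φ(x) = Σ c_n x^n` be a
non-polynomial function analytic near `0` with nonnegative coefficients, satisfying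
`E(x, φ(x)) = 0` near `0`, where the irreducible curve `E = 0` has a real proper rational
parametrization `(X,Y)` with `X(∞) = ∞`.  Then (i) there is a unique `s₀ ∈ ℝ` such that
`(P, s₀)` parametrizes `φ` locally at `0`; and (ii) assuming `X′(s₀) > 0`, the set
`{s ≥ s₀ : s critical}` has a least element `s_c` (so `s_c` is finite and is a critical
point), and `φ` has its dominant singularity at `x_c = X(s_c) > 0`: its radius of
convergence equals `x_c` and it admits no analytic continuation to any neighborhood
of `x_c`. -/
theorem statement17 (E : MvPolynomial (Fin 2) ℂ) (hE : Irreducible E)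
    (X Y : RationalMap) (hpar : IsParametrization E X Y) (hprop : IsProper E X Y)
    (hreal_X : X.IsReal) (hreal_Y : Y.IsReal)
    (hXinf : X.evalInf = OnePoint.infty)
    (φ : ℂ → ℂ) (c : ℕ → ℝ) (r : ℝ) (hr : 0 < r)
    (hc : ∀ x : ℂ, ‖x‖ < r → HasSum (fun n : ℕ => (c n : ℂ) * x ^ n) (φ x))
    (hc_nonneg : ∀ n, 0 ≤ c n)
    (hnonpoly : ∀ N : ℕ, ∃ n : ℕ, N ≤ n ∧ c n ≠ 0)
    (heq : ∀ᶠ x in nhds (0 : ℂ), evalE E x (φ x) = 0) :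
    (∃! s₀ : ℝ, X.eval (s₀ : ℂ) = ((0 : ℂ) : OnePoint ℂ) ∧
        ∀ᶠ t in nhds ((s₀ : ℝ) : ℂ), Y.eval t = ((φ (X.toFun t) : ℂ) : OnePoint ℂ)) ∧
    (∀ s₀ : ℝ,
      (X.eval ((s₀ : ℝ) : ℂ) = ((0 : ℂ) : OnePoint ℂ) ∧
        ∀ᶠ t in nhds ((s₀ : ℝ) : ℂ), Y.eval t = ((φ (X.toFun t) : ℂ) : OnePoint ℂ)) →
      (∃ d : ℝ, deriv X.toFun ((s₀ : ℝ) : ℂ) = (d : ℂ) ∧ 0 < d) →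
      ∃ sc : ℝ, IsLeast {s : ℝ | s₀ ≤ s ∧ IsCriticalPt X Y ((s : ℝ) : ℂ)} sc ∧
        ∃ xc : ℝ, X.toFun ((sc : ℝ) : ℂ) = (xc : ℂ) ∧ 0 < xc ∧
          (∀ x : ℂ, ‖x‖ < xc → Summable (fun n : ℕ => (c n : ℂ) * x ^ n)) ∧
          (∀ x : ℝ, xc < x → ¬ Summable (fun n : ℕ => c n * x ^ n)) ∧
          (¬ ∃ (g : ℂ → ℂ) (ε : ℝ), 0 < ε ∧
              (∀ w ∈ Metric.ball ((xc : ℝ) : ℂ) ε, AnalyticAt ℂ g w) ∧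
              ∀ x : ℂ, ‖x‖ < xc → x ∈ Metric.ball ((xc : ℝ) : ℂ) ε →
                g x = ∑' n : ℕ, (c n : ℂ) * x ^ n)) := by
  have hconv : ConvergesOn c r := fun x hx => (hc x hx).summable
  have hφ_eq : ∀ᶠ x in 𝓝 (0 : ℂ), φ x = powerSum c x := by
    filter_upwards [Metric.ball_mem_nhds (0 : ℂ) hr] with x hx
    exact (hc x (by simpa using hx)).tsum_eq.symm
  have hφ_an : AnalyticAt ℂ φ 0 :=
    (hconv.analyticAt hc_nonneg (by simpa using hr)).congr (hφ_eq.mono fun _ h => h.symm)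
  have hφ_real : ∀ᶠ x : ℝ in 𝓝 0, (starRingEnd ℂ) (φ x) = φ x := by
    have hcoe : Tendsto (fun x : ℝ => (x : ℂ)) (𝓝 0) (𝓝 0) :=
      Complex.continuous_ofReal.tendsto' _ _ (by simp)
    filter_upwards [hcoe.eventually hφ_eq] with x hx
    have : powerSum c (x : ℂ) = ((∑' n, c n * x ^ n : ℝ) : ℂ) := by
      rw [powerSum, Complex.ofReal_tsum]
      push_cast
      rfl
    rw [hx, this, Complex.conj_ofReal]
  refine ⟨?_, fun s₀ hs₀ hd => ?_⟩
  · obtain ⟨s₀, hs₀⟩ := exists_parametrizing_point hprop hreal_X hreal_Y hXinf hφ_an hφ_real heq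
    exact ⟨s₀, hs₀, fun s hs => Complex.ofReal_injective
      (parametrizing_point_unique hpar hprop hXinf hs.1 hs₀.1 hs.2 hs₀.2)⟩
  · have hgerm : ∀ᶠ t in 𝓝 (s₀ : ℂ), Y.toFun t = powerSum c (X.toFun t) := by
      obtain ⟨hX0, hX0'⟩ := RationalMap.eval_eq_coe_iff.1 hs₀.1
      have hlim := (X.analyticAt_toFun hX0).continuousAt.tendsto
      rw [hX0'] at hlim
      filter_upwards [hs₀.2, hlim.eventually hφ_eq] with t h1 h2
      rw [(RationalMap.eval_eq_coe_iff.1 h1).2, h2]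
    exact exists_isLeast_critical_of_germ hpar hprop hreal_X hreal_Y hXinf hr hconv hc_nonneg
      hnonpoly hs₀.1 (RationalMap.eval_eq_coe_iff.1 hs₀.2.self_of_nhds).1 hgerm hd
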